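/- arXiv:math/0503465 — 3 statements merged into one kernel-verified Lean document; each statement's English description precedes it below -/
import Mathlib

section
/- Let r, n ≥ 1, m = rn, and d ≥ 1. The number of pairs (P, Q) of equal-shape standard Young tableaux with entries [m] and at most d columns, both satisfying condition (T), equals the number of closed lattice walks of length 2m in ℤ^d from the origin to itself of the form a₁⋯a_m | b₁⋯b_m (m positive steps followed by m negative steps) staying in the region x₁ ≥ x₂ ≥ ... ≥ x_d, such that both a and b (read as column sequences) satisfy condition (W): a_{r(i−1)+s} ≥ a_{r(i−1)+s+1} for all i ∈ [n], 1 ≤ s < r. -/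
/-- Row-insert `x` into a single row: either append at the end, or bump the
smallest entry greater than `x`. Returns the new row and the bumped value. -/
def insertInRow (row : List ℕ) (x : ℕ) : List ℕ × Option ℕ :=
  match row.findIdx? (fun y => decide (x < y)) with
  | none => (row ++ [x], none)
  | some i => (row.set i x, row[i]?)

/-- RSK row-insertion (bumping) of `x` into a tableau given as its list of rows. -/
def rowInsertT : List (List ℕ) → ℕ → List (List ℕ)
  | [], x => [[x]]
  | r :: rs, x =>
    match insertInRow r x with
    | (r', none) => r' :: rs
    | (r', some y) => r' :: rowInsertT rs y

/-- The shape of a tableau: the list of its row lengths. -/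
def shapeT (T : List (List ℕ)) : List ℕ := T.map List.length

/-- The number of columns of a tableau: the length of its first row. -/
def numCols (T : List (List ℕ)) : ℕ := (T.getD 0 []).length

/-- The insertion tableau `P` of a word, built by successive row-insertions. -/
def rskP (l : List ℕ) : List (List ℕ) := l.foldl rowInsertT []

/-- The index of the row in which row-inserting `x` into `T` creates a new box. -/
def newBoxRow (T : List (List ℕ)) (x : ℕ) : ℕ :=
  (List.range (rowInsertT T x).length).findIdx
    (fun i => decide ((T.getD i []).length < ((rowInsertT T x).getD i []).length))

/-- The (row, column) position (0-indexed) of the new box created by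
row-inserting `x` into `T`. -/
def newBox (T : List (List ℕ)) (x : ℕ) : ℕ × ℕ :=
  (newBoxRow T x, ((rowInsertT T x).getD (newBoxRow T x) []).length - 1)

/-- One step of the full RSK algorithm on the pair `(P, Q)`: insert the value
`xi.1` into `P` and record the label `xi.2` in `Q` at the newly created box. -/
def rskStep (PQ : List (List ℕ) × List (List ℕ)) (xi : ℕ × ℕ) :
    List (List ℕ) × List (List ℕ) :=
  let r := newBoxRow PQ.1 xi.1
  (rowInsertT PQ.1 xi.1,
    if r < PQ.2.length then PQ.2.set r (PQ.2.getD r [] ++ [xi.2]) else PQ.2 ++ [[xi.2]])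

/-- The RSK pair `(P, Q)` of a word (the `i`-th letter gets recording label `i`). -/
def rskPQ (l : List ℕ) : List (List ℕ) × List (List ℕ) :=
  (l.zip (List.range' 1 l.length)).foldl rskStep ([], [])

/-- `T` is a standard Young tableau with entries `{1, …, m}`, given as its list of
rows: no empty rows, weakly decreasing row lengths, rows strictly increasing left
to right, columns strictly increasing top to bottom, and the entries are exactly
`1, …, m`. -/
def isSYT (m : ℕ) (T : List (List ℕ)) : Prop :=
  [] ∉ T ∧
  List.Chain' (fun a b => b.length ≤ a.length) T ∧
  (∀ r ∈ T, List.Chain' (· < ·) r) ∧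
  (∀ i j : ℕ, j < (T.getD (i + 1) []).length →
      (T.getD i []).getD j 0 < (T.getD (i + 1) []).getD j 0) ∧
  T.flatten.Perm (List.range' 1 m)

/-- The one-line word of a permutation of `Fin m`, with values in `{1, …, m}`. -/
def permList {m : ℕ} (π : Equiv.Perm (Fin m)) : List ℕ :=
  (List.finRange m).map (fun i => (π i : ℕ) + 1)

/-- The (0-indexed) row of tableau `T` containing the entry `e`. -/
def rowOf (T : List (List ℕ)) (e : ℕ) : ℕ := T.findIdx (fun r => r.contains e)

/-- **Condition (T)** for a tableau with entries `[m]`, `m = rn`: for each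
`i ∈ [n]` and `1 ≤ s < r`, the row containing `r(i−1)+s` is strictly above the
row containing `r(i−1)+s+1` (equivalently, for every entry `e` with
`e % r ≠ 0` and `e + 1 ≤ m`). -/
def condT (m r : ℕ) (T : List (List ℕ)) : Prop :=
  ∀ e : ℕ, 1 ≤ e → e + 1 ≤ m → e % r ≠ 0 → rowOf T e < rowOf T (e + 1)

/-- **Condition (W)** for a sequence of `m = rn` steps (0-indexed positions):
within each block of `r` consecutive positions the directions are weakly
decreasing, i.e. `a_{r(i−1)+s} ≥ a_{r(i−1)+s+1}` for `i ∈ [n]`, `1 ≤ s < r`. -/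
def condW {m : ℕ} (r : ℕ) (a : Fin m → ℕ) : Prop :=
  ∀ q : ℕ, ∀ h : q + 1 < m, (q + 1) % r ≠ 0 →
    a ⟨q + 1, h⟩ ≤ a ⟨q, by omega⟩

/-- The walk with positive unit steps in directions `a₁, …` (0-indexed) stays in
the region `x₁ ≥ x₂ ≥ … ≥ x_d`: every prefix has at least as many steps in
direction `k` as in direction `k + 1`. -/
def staysInRegion {m : ℕ} (a : Fin m → ℕ) : Prop :=
  ∀ t k : ℕ,
    (Finset.univ.filter (fun i : Fin m => (i : ℕ) < t ∧ a i = k + 1)).card ≤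
    (Finset.univ.filter (fun i : Fin m => (i : ℕ) < t ∧ a i = k)).card

open Finset

/-- The number of letters of `a` at positions `< t` equal to `k`. -/
def letterCount {m : ℕ} (a : Fin m → ℕ) (t k : ℕ) : ℕ :=
  (univ.filter (fun i : Fin m => (i : ℕ) < t ∧ a i = k)).card

/-- The conjugate word: the letter at `q` is the number of earlier occurrences of `a q`.
For words staying in the region this exchanges row words and column words of tableaux. -/
def conjWord {m : ℕ} (a : Fin m → ℕ) (q : Fin m) : ℕ := letterCount a q (a q)

section Words

variable {m : ℕ} {a b : Fin m → ℕ}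

theorem letterCount_mono {t t' : ℕ} (h : t ≤ t') (k : ℕ) :
    letterCount a t k ≤ letterCount a t' k := by
  apply card_le_card
  intro i
  simp only [mem_filter, mem_univ, true_and]
  exact fun hi => ⟨by omega, hi.2⟩

theorem letterCount_succ_self (q : Fin m) :
    letterCount a (q + 1) (a q) = letterCount a q (a q) + 1 := by
  unfold letterCount
  rw [← card_insert_of_notMem (a := q) (by simp)]
  congr 1
  ext i
  simp only [mem_filter, mem_univ, true_and, mem_insert, Fin.ext_iff]
  constructor
  · rintro ⟨h, h'⟩
    exact (Nat.lt_succ_iff_lt_or_eq.mp h).elim (fun h => Or.inr ⟨h, h'⟩) Or.inl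
  · rintro (h | h)
    · exact ⟨by omega, congrArg a (Fin.ext h)⟩
    · exact ⟨by omega, h.2⟩

theorem letterCount_succ_of_ne {t k : ℕ} (h : ∀ i : Fin m, (i : ℕ) = t → a i ≠ k) :
    letterCount a (t + 1) k = letterCount a t k := by
  unfold letterCount
  congr 1
  ext i
  simp only [mem_filter, mem_univ, true_and]
  constructor
  · rintro ⟨h1, h2⟩
    exact ⟨lt_of_le_of_ne (by omega) (fun h3 => h i h3 h2), h2⟩
  · exact fun h => ⟨by omega, h.2⟩

theorem letterCount_length (k : ℕ) :
    letterCount a m k = (univ.filter (fun i => a i = k)).card := by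
  simp [letterCount]

theorem staysInRegion.antitone (ha : staysInRegion a) (t : ℕ) : Antitone (letterCount a t) :=
  antitone_nat_of_succ_le (ha t)

theorem letterCount_lt_of_lt {p q : Fin m} (h : p < q) (e : a p = a q) :
    letterCount a p (a p) < letterCount a q (a q) := by
  have h1 := letterCount_succ_self (a := a) p
  have h2 := letterCount_mono (a := a) (t := p + 1) (t' := q) h (a p)
  rw [← e]
  omega

theorem exists_conjWord_eq_of_lt_letterCount {i t k : ℕ} (h : i < letterCount a t k) :
    ∃ q : Fin m, (q : ℕ) < t ∧ a q = k ∧ conjWord a q = i := by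
  induction t with
  | zero => simp [letterCount] at h
  | succ t ih =>
    by_cases hi : i < letterCount a t k
    · obtain ⟨q, h1, h2⟩ := ih hi
      exact ⟨q, by omega, h2⟩
    · by_cases hq : ∃ q : Fin m, (q : ℕ) = t ∧ a q = k
      · obtain ⟨q, rfl, rfl⟩ := hq
        rw [letterCount_succ_self] at h
        exact ⟨q, by omega, rfl, by unfold conjWord; omega⟩
      · rw [letterCount_succ_of_ne (fun q h1 h2 => hq ⟨q, h1, h2⟩)] at h
        exact absurd h hi

theorem mem_iff_lt_card_of_isLowerSet {s : Finset ℕ} (hs : IsLowerSet (s : Set ℕ)) (x : ℕ) :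
    x ∈ s ↔ x < s.card := by
  constructor
  · intro hx
    have : range (x + 1) ⊆ s := fun y hy => hs (by simpa [Nat.lt_succ_iff] using hy) hx
    simpa using card_le_card this
  · intro hx
    by_contra hn
    have : s ⊆ range x := fun y hy => by
      rw [mem_range]
      by_contra hxy
      exact hn (hs (not_lt.mp hxy) hy)
    have := card_le_card this
    rw [card_range] at this
    omega

/-- The letter counts of the conjugate word form the conjugate partition. -/
theorem lt_letterCount_conjWord_iff (ha : staysInRegion a) (t i x : ℕ) :
    x < letterCount (conjWord a) t i ↔ i < letterCount a t x := by
  set S := univ.filter (fun q : Fin m => (q : ℕ) < t ∧ conjWord a q = i)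
  have hmem (y : ℕ) : y ∈ S.image a ↔ i < letterCount a t y := by
    simp only [S, mem_image, mem_filter, mem_univ, true_and]
    constructor
    · rintro ⟨q, ⟨h1, rfl⟩, rfl⟩
      have h2 := letterCount_succ_self (a := a) q
      have h3 := letterCount_mono (a := a) (t := q + 1) h1 (a q)
      unfold conjWord
      omega
    · intro h
      obtain ⟨q, h1, h2, h3⟩ := exists_conjWord_eq_of_lt_letterCount h
      exact ⟨q, ⟨h1, h3⟩, h2⟩
  have hinj : Set.InjOn a S := by
    intro p hp q hq e
    simp only [S, coe_filter, mem_univ, true_and, Set.mem_ofPred_eq] at hp hq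
    have hpq : letterCount a p (a p) = letterCount a q (a q) := hp.2.trans hq.2.symm
    rcases lt_trichotomy p q with h | h | h
    · exact absurd hpq (letterCount_lt_of_lt h e).ne
    · exact h
    · exact absurd hpq (letterCount_lt_of_lt h e.symm).ne'
  have hlow : IsLowerSet ((S.image a : Finset ℕ) : Set ℕ) := by
    intro x y hyx hx
    rw [mem_coe, hmem] at hx ⊢
    exact hx.trans_le (ha.antitone t hyx)
  rw [← hmem, mem_iff_lt_card_of_isLowerSet hlow, card_image_of_injOn hinj]
  rfl

theorem staysInRegion_conjWord (ha : staysInRegion a) : staysInRegion (conjWord a) := by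
  intro t k
  change letterCount (conjWord a) t (k + 1) ≤ letterCount (conjWord a) t k
  refine le_of_forall_lt fun x hx => ?_
  rw [lt_letterCount_conjWord_iff ha] at hx ⊢
  omega

theorem conjWord_conjWord (ha : staysInRegion a) : conjWord (conjWord a) = a := by
  funext q
  refine eq_of_forall_lt_iff fun x => ?_
  rw [conjWord, lt_letterCount_conjWord_iff ha, conjWord]
  constructor
  · intro h
    by_contra hx
    exact absurd (ha.antitone q (not_lt.mp hx)) (not_le.mpr h)
  · intro h
    have h1 := ha.antitone (q + 1) h.le
    rw [letterCount_succ_self, letterCount_succ_of_ne] at h1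
    · omega
    · intro i hi
      rw [Fin.ext hi]
      exact h.ne'

theorem letterCount_conjWord_congr (ha : staysInRegion a) (hb : staysInRegion b)
    (h : ∀ k, letterCount a m k = letterCount b m k) (k : ℕ) :
    letterCount (conjWord a) m k = letterCount (conjWord b) m k := by
  refine eq_of_forall_lt_iff fun x => ?_
  rw [lt_letterCount_conjWord_iff ha, lt_letterCount_conjWord_iff hb, h]

theorem letterCount_conjWord_eq_iff (ha : staysInRegion a) (hb : staysInRegion b) :
    (∀ k, letterCount (conjWord a) m k = letterCount (conjWord b) m k) ↔
      ∀ k, letterCount a m k = letterCount b m k := by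
  refine ⟨fun h => ?_, letterCount_conjWord_congr ha hb⟩
  have := letterCount_conjWord_congr (staysInRegion_conjWord ha) (staysInRegion_conjWord hb) h
  rwa [conjWord_conjWord ha, conjWord_conjWord hb] at this

theorem letterCount_pos (q : Fin m) : 0 < letterCount a m (a q) :=
  card_pos.mpr ⟨q, by simp⟩

theorem letterCount_zero_le_iff (ha : staysInRegion a) (d : ℕ) :
    letterCount a m 0 ≤ d ↔ ∀ q, conjWord a q < d := by
  rw [← not_lt, ← lt_letterCount_conjWord_iff ha]
  constructor
  · intro h q
    by_contra hq
    exact h ((letterCount_pos q).trans_le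
      ((staysInRegion_conjWord ha).antitone m (not_lt.mp hq)))
  · intro h h0
    obtain ⟨q, hq⟩ := card_pos.mp h0
    simp only [mem_filter, mem_univ, true_and] at hq
    exact (h q).ne hq.2

theorem lt_iff_conjWord_le (ha : staysInRegion a) {p q : Fin m} (hpq : (q : ℕ) = p + 1) :
    a p < a q ↔ conjWord a q ≤ conjWord a p := by
  unfold conjWord
  rw [hpq]
  constructor
  · intro h
    rw [letterCount_succ_of_ne]
    · exact ha.antitone p h.le
    · intro i hi
      rw [Fin.ext hi]
      exact h.ne
  · intro h
    by_contra hlt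
    have h1 := ha.antitone (p + 1) (not_lt.mp hlt)
    rw [letterCount_succ_self] at h1
    omega

end Words

/-- The increasing list of the labels `q + 1` of the positions `q` with `a q = k`. -/
def letterRow {m : ℕ} (a : Fin m → ℕ) (k : ℕ) : List ℕ :=
  ((List.finRange m).filter (fun q => a q = k)).map (fun q : Fin m => (q : ℕ) + 1)

/-- The tableau whose `k`-th row lists the positions of the letter `k`. -/
def tableauOfWord {m : ℕ} (a : Fin m → ℕ) : List (List ℕ) :=
  (List.range (univ.sup (fun q => a q + 1))).map (letterRow a)

/-- The word of row indices of the entries `1, …, m` of a tableau. -/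
def rowWord (m : ℕ) (T : List (List ℕ)) (q : Fin m) : ℕ := rowOf T (q + 1)

section Lists

theorem lt_countP_le_iff_of_pairwise {L : List ℕ} (hL : L.Pairwise (· < ·)) (x j : ℕ) :
    j < L.countP (· ≤ x) ↔ j < L.length ∧ L.getD j 0 ≤ x := by
  induction L generalizing j with
  | nil => simp
  | cons y L ih =>
    rw [List.pairwise_cons] at hL
    have hz : ¬ y ≤ x → L.countP (· ≤ x) = 0 := by
      intro h
      rw [List.countP_eq_zero]
      intro z hz
      have := hL.1 z hz
      simp only [decide_eq_true_eq]
      omega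
    by_cases hy : y ≤ x
    · rw [List.countP_cons_of_pos (by simpa using hy)]
      cases j with
      | zero => simp [hy]
      | succ j => simp [ih hL.2]
    · rw [List.countP_cons_of_neg (by simpa using hy), hz hy]
      cases j with
      | zero => simp [hy]
      | succ j =>
        have := ih hL.2 j
        rw [hz hy] at this
        simpa using this

theorem ext_getD_of_nil_notMem {S T : List (List ℕ)} (hS : [] ∉ S) (hT : [] ∉ T)
    (h : ∀ k, S.getD k [] = T.getD k []) : S = T := by
  refine List.ext_getElem? fun k => ?_
  have hk := h k
  rw [List.getD_eq_getElem?_getD, List.getD_eq_getElem?_getD] at hk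
  rcases hs : S[k]? with _ | s <;> rcases ht : T[k]? with _ | t
  · rfl
  · rw [hs, ht] at hk
    simp only [Option.getD_none, Option.getD_some] at hk
    exact absurd (List.mem_of_getElem? ht) (hk ▸ hT)
  · rw [hs, ht] at hk
    simp only [Option.getD_none, Option.getD_some] at hk
    exact absurd (List.mem_of_getElem? hs) (hk ▸ hS)
  · rw [hs, ht] at hk
    simpa using hk

theorem shapeT_eq_iff {S T : List (List ℕ)} (hS : [] ∉ S) (hT : [] ∉ T) :
    shapeT S = shapeT T ↔ ∀ k, (S.getD k []).length = (T.getD k []).length := by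
  have key (U : List (List ℕ)) (k : ℕ) : (shapeT U).getD k 0 = (U.getD k []).length := by
    simp only [shapeT, List.getD_eq_getElem?_getD, List.getElem?_map]
    cases U[k]? <;> rfl
  constructor
  · intro h k
    rw [← key, ← key, h]
  · intro h
    have pos (U : List (List ℕ)) (hU : [] ∉ U) (k : ℕ) :
        (shapeT U)[k]? = if (U.getD k []).length = 0 then none
          else some (U.getD k []).length := by
      simp only [shapeT, List.getD_eq_getElem?_getD, List.getElem?_map]
      rcases hu : U[k]? with _ | u
      · simp
      · have : u ≠ [] := fun e => hU (e ▸ List.mem_of_getElem? hu)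
        simp [this]
    refine List.ext_getElem? fun k => ?_
    rw [pos S hS, pos T hT, h]

theorem mem_getD_imp_mem_flatten {T : List (List ℕ)} {k e : ℕ} (h : e ∈ T.getD k []) :
    e ∈ T.flatten := by
  rw [List.mem_flatten]
  by_cases hk : k < T.length
  · rw [List.getD_eq_getElem _ _ hk] at h
    exact ⟨_, List.getElem_mem hk, h⟩
  · rw [List.getD_eq_default _ _ (not_lt.mp hk)] at h
    simp at h

theorem rowOf_eq_iff_mem_getD {T : List (List ℕ)} (hT : T.flatten.Nodup) {e : ℕ}
    (he : e ∈ T.flatten) (k : ℕ) : rowOf T e = k ↔ e ∈ T.getD k [] := by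
  have hlt : rowOf T e < T.length := by
    obtain ⟨l, hl, hel⟩ := List.mem_flatten.mp he
    exact List.findIdx_lt_length_of_exists ⟨l, hl, by simpa using hel⟩
  have hmem : e ∈ T[rowOf T e] :=
    List.contains_iff_mem.mp
      (List.findIdx_getElem (xs := T) (p := fun r : List ℕ => r.contains e) (w := hlt))
  constructor
  · rintro rfl
    rwa [List.getD_eq_getElem _ _ hlt]
  · intro h
    have hk : k < T.length := by
      by_contra hk
      rw [List.getD_eq_default _ _ (not_lt.mp hk)] at h
      simp at h
    rw [List.getD_eq_getElem _ _ hk] at h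
    have hd := (List.nodup_flatten.mp hT).2
    rw [List.pairwise_iff_getElem] at hd
    rcases lt_trichotomy (rowOf T e) k with hlt' | heq | hlt'
    · exact absurd h (fun h => hd _ _ hlt hk hlt' hmem h)
    · exact heq
    · exact absurd h (fun h => hd _ _ hk hlt hlt' h hmem)

end Lists

section Tableaux

variable {m : ℕ} {a : Fin m → ℕ} {T : List (List ℕ)}

theorem mem_letterRow {k e : ℕ} : e ∈ letterRow a k ↔ ∃ q : Fin m, a q = k ∧ (q : ℕ) + 1 = e := by
  simp [letterRow]

theorem letterRow_pairwise (k : ℕ) : (letterRow a k).Pairwise (· < ·) := by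
  unfold letterRow
  rw [List.pairwise_map]
  refine ((List.pairwise_lt_finRange m).filter _).imp ?_
  intro p q h
  have : (p : ℕ) < q := h
  omega

theorem countP_letterRow (t k : ℕ) : (letterRow a k).countP (· ≤ t) = letterCount a t k := by
  rw [letterRow, List.countP_map, List.countP_filter, letterCount, List.countP_eq_length_filter,
    ← List.toFinset_card_of_nodup ((List.nodup_finRange m).filter _)]
  congr 1
  ext i
  simp

theorem length_letterRow (k : ℕ) : (letterRow a k).length = letterCount a m k := by
  rw [← countP_letterRow, eq_comm, List.countP_eq_length]
  intro e he
  obtain ⟨q, -, rfl⟩ := mem_letterRow.mp he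
  simp

theorem getD_tableauOfWord (k : ℕ) : (tableauOfWord a).getD k [] = letterRow a k := by
  unfold tableauOfWord
  by_cases hk : k < univ.sup (fun q => a q + 1)
  · rw [List.getD_eq_getElem _ _ (by simpa using hk)]
    simp
  · rw [List.getD_eq_default _ _ (by simpa using hk), eq_comm, List.eq_nil_iff_forall_not_mem]
    intro e he
    obtain ⟨q, rfl, -⟩ := mem_letterRow.mp he
    have := le_sup (f := fun q => a q + 1) (mem_univ q)
    omega

theorem isSYT_tableauOfWord (ha : staysInRegion a) : isSYT m (tableauOfWord a) := by
  refine ⟨?_, ?_, ?_, ?_, ?_⟩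
  · intro h
    simp only [tableauOfWord, List.mem_map, List.mem_range, Finset.lt_sup_iff, mem_univ,
      true_and] at h
    obtain ⟨k, ⟨q, hq⟩, hk⟩ := h
    have h1 := ha.antitone m (Nat.lt_succ_iff.mp hq)
    have h2 := letterCount_pos (a := a) q
    rw [← length_letterRow k, hk, List.length_nil] at h1
    omega
  · rw [tableauOfWord, List.Chain', List.isChain_map]
    refine (List.isChain_range _ _).mpr fun k _ => ?_
    rw [length_letterRow, length_letterRow]
    exact ha m k
  · intro l hl
    obtain ⟨k, -, rfl⟩ := List.mem_map.mp hl
    exact (letterRow_pairwise k).isChain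
  · intro i j hj
    rw [getD_tableauOfWord] at hj
    rw [getD_tableauOfWord, getD_tableauOfWord]
    obtain ⟨q, hq, hqe⟩ := mem_letterRow.mp (List.getElem_mem hj)
    rw [List.getD_eq_getElem _ _ hj, ← hqe]
    have h1 := (lt_countP_le_iff_of_pairwise (letterRow_pairwise (a := a) (i + 1)) (q + 1) j).mpr
      ⟨hj, by rw [List.getD_eq_getElem _ _ hj, hqe]⟩
    rw [countP_letterRow] at h1
    have h2 := h1.trans_le (ha (q + 1) i)
    change j < letterCount a (q + 1) i at h2
    rw [letterCount_succ_of_ne (fun p hp => by rw [Fin.ext hp, hq]; omega), ← countP_letterRow,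
      lt_countP_le_iff_of_pairwise (letterRow_pairwise i)] at h2
    omega
  · rw [List.perm_ext_iff_of_nodup]
    · intro e
      simp only [tableauOfWord, List.mem_flatten, List.mem_map, List.mem_range, Finset.lt_sup_iff,
        mem_univ, true_and, List.mem_range'_1]
      constructor
      · rintro ⟨_, ⟨k, -, rfl⟩, he⟩
        obtain ⟨q, -, rfl⟩ := mem_letterRow.mp he
        omega
      · rintro ⟨h1, h2⟩
        exact ⟨_, ⟨a ⟨e - 1, by omega⟩, ⟨_, Nat.lt_succ_self _⟩, rfl⟩,
          mem_letterRow.mpr ⟨⟨e - 1, by omega⟩, rfl, by simp only; omega⟩⟩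
    · rw [List.nodup_flatten]
      constructor
      · intro l hl
        obtain ⟨k, -, rfl⟩ := List.mem_map.mp hl
        exact (letterRow_pairwise k).imp (fun h => h.ne)
      · rw [tableauOfWord, List.pairwise_map]
        refine List.pairwise_lt_range.imp fun {k l} hkl e hk hl => ?_
        obtain ⟨p, rfl, hp⟩ := mem_letterRow.mp hk
        obtain ⟨q, rfl, hq⟩ := mem_letterRow.mp hl
        have : p = q := Fin.ext (by omega)
        subst this
        exact lt_irrefl _ hkl
    · exact List.nodup_range'

theorem isSYT.rowWord_eq_iff (hT : isSYT m T) (q : Fin m) (k : ℕ) :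
    rowWord m T q = k ↔ (q : ℕ) + 1 ∈ T.getD k [] := by
  obtain ⟨-, -, -, -, hperm⟩ := hT
  refine rowOf_eq_iff_mem_getD (hperm.nodup_iff.mpr List.nodup_range') ?_ k
  rw [hperm.mem_iff, List.mem_range'_1]
  omega

theorem isSYT.getD_pairwise (hT : isSYT m T) (k : ℕ) : (T.getD k []).Pairwise (· < ·) := by
  by_cases hk : k < T.length
  · rw [List.getD_eq_getElem _ _ hk]
    exact List.isChain_iff_pairwise.mp (hT.2.2.1 _ (List.getElem_mem hk))
  · rw [List.getD_eq_default _ _ (not_lt.mp hk)]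
    exact List.Pairwise.nil

theorem isSYT.letterRow_rowWord (hT : isSYT m T) (k : ℕ) :
    letterRow (rowWord m T) k = T.getD k [] := by
  refine List.Perm.eq_of_pairwise (fun _ _ _ _ h h' => absurd h h'.asymm) (letterRow_pairwise k)
    (hT.getD_pairwise k) ?_
  rw [List.perm_ext_iff_of_nodup ((letterRow_pairwise k).imp (fun h => h.ne))
    ((hT.getD_pairwise k).imp (fun h => h.ne))]
  intro e
  rw [mem_letterRow]
  constructor
  · rintro ⟨q, hq, rfl⟩
    exact (hT.rowWord_eq_iff q k).mp hq
  · intro he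
    have h := mem_getD_imp_mem_flatten he
    rw [hT.2.2.2.2.mem_iff, List.mem_range'_1] at h
    have h1 : e - 1 + 1 = e := by omega
    exact ⟨⟨e - 1, by omega⟩, (hT.rowWord_eq_iff _ k).mpr (by simpa only [h1] using he), h1⟩

theorem isSYT.tableauOfWord_rowWord (hT : isSYT m T) (hw : staysInRegion (rowWord m T)) :
    tableauOfWord (rowWord m T) = T :=
  ext_getD_of_nil_notMem (isSYT_tableauOfWord hw).1 hT.1 fun k => by
    rw [getD_tableauOfWord, hT.letterRow_rowWord]

theorem isSYT.staysInRegion_rowWord (hT : isSYT m T) : staysInRegion (rowWord m T) := by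
  intro t k
  change letterCount (rowWord m T) t (k + 1) ≤ letterCount (rowWord m T) t k
  refine le_of_forall_lt fun j hj => ?_
  rw [← countP_letterRow, hT.letterRow_rowWord,
    lt_countP_le_iff_of_pairwise (hT.getD_pairwise _)] at hj ⊢
  refine ⟨?_, (hT.2.2.2.1 k j hj.1).le.trans hj.2⟩
  by_cases hk : k + 1 < T.length
  · have := List.isChain_iff_getElem.mp hT.2.1 k hk
    rw [List.getD_eq_getElem _ _ hk] at hj
    rw [List.getD_eq_getElem _ _ (by omega)]
    exact hj.1.trans_le this
  · rw [List.getD_eq_default _ _ (not_lt.mp hk)] at hj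
    simp at hj

theorem rowWord_tableauOfWord (ha : staysInRegion a) : rowWord m (tableauOfWord a) = a := by
  funext q
  rw [(isSYT_tableauOfWord ha).rowWord_eq_iff, getD_tableauOfWord, mem_letterRow]
  exact ⟨q, rfl, rfl⟩

theorem isSYT.length_getD (hT : isSYT m T) (k : ℕ) :
    (T.getD k []).length = letterCount (rowWord m T) m k := by
  rw [← hT.letterRow_rowWord, length_letterRow]

theorem condT_iff_condW_conjWord (r : ℕ) (hT : isSYT m T) :
    condT m r T ↔ condW r (conjWord (rowWord m T)) := by
  have key (q : ℕ) (h : q + 1 < m) :=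
    lt_iff_conjWord_le hT.staysInRegion_rowWord (p := ⟨q, by omega⟩) (q := ⟨q + 1, h⟩) rfl
  constructor
  · intro hc q h hq
    exact (key q h).mp (hc (q + 1) (by omega) (by omega) hq)
  · intro hc e h1 h2 h3
    obtain ⟨q, rfl⟩ := Nat.exists_eq_add_of_le' h1
    exact (key q (by omega)).mpr (hc q (by omega) h3)

/-- A tableau corresponds to the word of column indices of its entries. -/
def columnWordEquiv (m : ℕ) :
    {T : List (List ℕ) // isSYT m T} ≃ {a : Fin m → ℕ // staysInRegion a} where
  toFun T := ⟨conjWord (rowWord m T.1), staysInRegion_conjWord T.2.staysInRegion_rowWord⟩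
  invFun a := ⟨tableauOfWord (conjWord a.1), isSYT_tableauOfWord (staysInRegion_conjWord a.2)⟩
  left_inv T := Subtype.ext <| by
    have hw := T.2.staysInRegion_rowWord
    simp only [conjWord_conjWord hw, T.2.tableauOfWord_rowWord hw]
  right_inv a := Subtype.ext <| by
    simp only [rowWord_tableauOfWord (staysInRegion_conjWord a.2), conjWord_conjWord a.2]

end Tableaux

/-- Regroup a subtype of a product whose predicate constrains both components. -/
def subtypeProdEquiv {α β : Type*} {p : α → Prop} {q : β → Prop} {P : α × β → Prop}
    {R : Subtype p × Subtype q → Prop}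
    (h : ∀ x, P x ↔ ∃ (h1 : p x.1) (h2 : q x.2), R (⟨x.1, h1⟩, ⟨x.2, h2⟩)) :
    {x // P x} ≃ {y // R y} where
  toFun x := ⟨(⟨x.1.1, ((h _).mp x.2).1⟩, ⟨x.1.2, ((h _).mp x.2).2.1⟩), ((h _).mp x.2).2.2⟩
  invFun y := ⟨(y.1.1.1, y.1.2.1), (h _).mpr ⟨y.1.1.2, y.1.2.2, y.2⟩⟩
  left_inv _ := rfl
  right_inv _ := rfl

/-- For `m = rn`, the number of pairs of equal-shape standard Young tableaux
with entries `[m]`, at most `d` columns and both satisfying condition (T),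
equals the number of closed walks `a₁⋯a_m | b₁⋯b_m` in `ℤ^d` from the origin to
itself (`m` positive steps followed by `m` negative steps taken in reversed
order, so closedness means each direction is used equally often by `a` and `b`)
staying in the region `x₁ ≥ … ≥ x_d`, with both halves satisfying condition (W). -/
theorem card_tableau_pairs_condT_eq_card_walks (r n d : ℕ)
    (hr : 1 ≤ r) (hn : 1 ≤ n) (hd : 1 ≤ d) :
    Nat.card {PQ : List (List ℕ) × List (List ℕ) //
        isSYT (r * n) PQ.1 ∧ isSYT (r * n) PQ.2 ∧ shapeT PQ.1 = shapeT PQ.2 ∧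
        numCols PQ.1 ≤ d ∧ numCols PQ.2 ≤ d ∧
        condT (r * n) r PQ.1 ∧ condT (r * n) r PQ.2} =
    Nat.card {ab : (Fin (r * n) → ℕ) × (Fin (r * n) → ℕ) //
        (∀ i, ab.1 i < d) ∧ (∀ j, ab.2 j < d) ∧
        (∀ k : ℕ,
          (Finset.univ.filter (fun i => ab.1 i = k)).card =
          (Finset.univ.filter (fun j => ab.2 j = k)).card) ∧
        staysInRegion ab.1 ∧ staysInRegion ab.2 ∧
        condW r ab.1 ∧ condW r ab.2} := by
  let W := {a : Fin (r * n) → ℕ // staysInRegion a}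
  let R : W × W → Prop := fun ab =>
    (∀ i, ab.1.1 i < d) ∧ (∀ j, ab.2.1 j < d) ∧
      (∀ k, letterCount ab.1.1 (r * n) k = letterCount ab.2.1 (r * n) k) ∧
      condW r ab.1.1 ∧ condW r ab.2.1
  let e := columnWordEquiv (r * n)
  refine Nat.card_congr (((subtypeProdEquiv (R := fun PQ => R (e PQ.1, e PQ.2)) ?_).trans
    ((e.prodCongr e).subtypeEquiv fun _ => Iff.rfl)).trans
    (subtypeProdEquiv (R := R) ?_).symm)
  · rintro ⟨P, Q⟩
    have key (hP : isSYT (r * n) P) (hQ : isSYT (r * n) Q) :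
        R (e ⟨P, hP⟩, e ⟨Q, hQ⟩) ↔ numCols P ≤ d ∧ numCols Q ≤ d ∧ shapeT P = shapeT Q ∧
          condT (r * n) r P ∧ condT (r * n) r Q := by
      rw [condT_iff_condW_conjWord r hP, condT_iff_condW_conjWord r hQ, numCols, numCols,
        shapeT_eq_iff hP.1 hQ.1]
      simp only [hP.length_getD, hQ.length_getD]
      rw [← letterCount_conjWord_eq_iff hP.staysInRegion_rowWord hQ.staysInRegion_rowWord,
        letterCount_zero_le_iff hP.staysInRegion_rowWord,
        letterCount_zero_le_iff hQ.staysInRegion_rowWord]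
      rfl
    constructor
    · rintro ⟨hP, hQ, h1, h2, h3, h4, h5⟩
      exact ⟨hP, hQ, (key hP hQ).mpr ⟨h2, h3, h1, h4, h5⟩⟩
    · rintro ⟨hP, hQ, h⟩
      obtain ⟨h2, h3, h1, h4, h5⟩ := (key hP hQ).mp h
      exact ⟨hP, hQ, h1, h2, h3, h4, h5⟩
  · rintro ⟨a, b⟩
    simp only [R, letterCount_length]
    tauto
end

section
/- The number of permutations σ of [m] with no increasing subsequence of length greater than d equals the number of pairs (P, Q) of standard Young tableaux of the same shape with entries [m] and at most d columns. -/
/-- Row `r` may stand directly above row `s` in a tableau: `s` is at most as long as `r` and the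
columns strictly increase. -/
def RowAbove (r s : List ℕ) : Prop :=
  ∀ (j z : ℕ), s[j]? = some z → ∃ w, r[j]? = some w ∧ w < z

/-- Semistandard tableaux, given as lists of nonempty rows. -/
def IsSemistandard : List (List ℕ) → Prop
  | [] => True
  | r :: T => r ≠ [] ∧ r.Pairwise (· ≤ ·) ∧ RowAbove r (T.headD []) ∧ IsSemistandard T

/-- `RowInsertion T x T'` says that row insertion of `x` into `T` yields `T'`. -/
inductive RowInsertion : List (List ℕ) → ℕ → List (List ℕ) → Prop
  | nil (x : ℕ) : RowInsertion [] x [[x]]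
  | append {r : List ℕ} {T : List (List ℕ)} {x : ℕ} (hr : ∀ z ∈ r, z ≤ x) :
      RowInsertion (r :: T) x ((r ++ [x]) :: T)
  | bump {a b : List ℕ} {T T₁ : List (List ℕ)} {x y : ℕ} (ha : ∀ z ∈ a, z ≤ x) (hxy : x < y)
      (hb : ∀ z ∈ b, y ≤ z) (hT : RowInsertion T y T₁) :
      RowInsertion ((a ++ y :: b) :: T) x ((a ++ x :: b) :: T₁)

/-- `AddBox T n T'` says that `T'` arises from `T` by appending `n` to one row, possibly a new
last row. -/
inductive AddBox : List (List ℕ) → ℕ → List (List ℕ) → Prop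
  | nil (n : ℕ) : AddBox [] n [[n]]
  | head (r : List ℕ) (T : List (List ℕ)) (n : ℕ) : AddBox (r :: T) n ((r ++ [n]) :: T)
  | cons (r : List ℕ) {T T₁ : List (List ℕ)} {n : ℕ} (hT : AddBox T n T₁) :
      AddBox (r :: T) n (r :: T₁)

/-- `RSK w P Q` says that `P` and `Q` are the insertion and recording tableaux of the reverse
of the word `w`. -/
inductive RSK : List ℕ → List (List ℕ) → List (List ℕ) → Prop
  | nil : RSK [] [] []
  | cons {w : List ℕ} {P Q P₁ Q₁ : List (List ℕ)} {x : ℕ} (h : RSK w P Q)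
      (hP : RowInsertion P x P₁) (hQ : AddBox Q (w.length + 1) Q₁)
      (hshape : shapeT P₁ = shapeT Q₁) : RSK (x :: w) P₁ Q₁

/-- The effect of row insertion of `x` on a single row: `x` is placed at the first position whose
entry exceeds `x`, or at the end. -/
def RowStep (p : List ℕ) (x : ℕ) (p' : List ℕ) : Prop :=
  ∃ q ≤ p.length, p'[q]? = some x ∧ (∀ j, j ≠ q → p'[j]? = p[j]?) ∧
    (∀ j z, j < q → p[j]? = some z → z ≤ x) ∧ (∀ j z, q ≤ j → p[j]? = some z → x < z)

lemma RowInsertion.rowStep {T T' : List (List ℕ)} {x : ℕ} (h : RowInsertion T x T') :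
    RowStep (T.headD []) x (T'.headD []) := by
  cases h with
  | nil => exact ⟨0, by simp, by simp, by grind, by simp, by simp⟩
  | @append r T _ hr =>
    refine ⟨r.length, by simp, by simp, ?_, ?_, ?_⟩ <;> simp only [List.headD_cons]
    · grind
    · intro j z _ hz
      exact hr z (List.mem_of_getElem? hz)
    · grind
  | @bump a b T T' _ y ha hxy hb hT =>
    refine ⟨a.length, by simp, by simp, ?_, ?_, ?_⟩ <;> simp only [List.headD_cons]
    · intro j hj
      rcases lt_or_ge j a.length with h | h
      · simp [List.getElem?_append_left h]
      · obtain ⟨k, rfl⟩ : ∃ k, j = a.length + (k + 1) := ⟨j - a.length - 1, by omega⟩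
        simp [List.getElem?_append_right]
    · intro j z hj hz
      rw [List.getElem?_append_left hj] at hz
      exact ha z (List.mem_of_getElem? hz)
    · intro j z hj hz
      rw [List.getElem?_append_right hj] at hz
      have := List.mem_of_getElem? hz
      grind

lemma RowInsertion.perm {T T' : List (List ℕ)} {x : ℕ} (h : RowInsertion T x T') :
    T'.flatten.Perm (x :: T.flatten) := by
  induction h with
  | nil => simp
  | append => grind
  | @bump a b T T' x y _ _ _ _ ih =>
    simp only [List.flatten_cons]
    rw [List.perm_iff_count] at *
    grind

lemma AddBox.perm {T T' : List (List ℕ)} {n : ℕ} (h : AddBox T n T') :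
    T'.flatten.Perm (n :: T.flatten) := by
  induction h with
  | nil => simp
  | head => grind
  | cons => simp only [List.flatten_cons]; rw [List.perm_iff_count] at *; grind

lemma RowAbove.length_le {r s : List ℕ} (h : RowAbove r s) : s.length ≤ r.length := by
  by_contra! hlt
  obtain ⟨w, hw, -⟩ := h r.length _ (List.getElem?_eq_getElem hlt)
  simp at hw

lemma rowAbove_nil (r : List ℕ) : RowAbove r [] := by
  intro j z h
  simp at h

lemma getElem?_append_cons (a b : List ℕ) (x j : ℕ) :
    (a ++ x :: b)[j]? =
      if j < a.length then a[j]? else if j = a.length then some x else b[j - a.length - 1]? := by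
  grind

lemma RowAbove.bump {a b s s' : List ℕ} {x y : ℕ} (h : RowAbove (a ++ y :: b) s)
    (ha : ∀ z ∈ a, z ≤ x) (hxy : x < y) (hs : RowStep s y s') :
    RowAbove (a ++ x :: b) s' := by
  obtain ⟨q, hq, h1, h2, h3, h4⟩ := hs
  have hqa : q ≤ a.length := by
    by_contra! hlt
    have hz := List.getElem?_eq_getElem (hlt.trans_le hq)
    obtain ⟨w, hw, hlt'⟩ := h _ _ hz
    have := h3 _ _ hlt hz
    grind
  intro j z hz
  by_cases hjq : j = q
  · subst hjq
    rw [h1] at hz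
    obtain rfl := Option.some.inj hz
    rcases hqa.lt_or_eq with hlt | rfl
    · exact ⟨a[j], by grind, (ha _ (List.getElem_mem hlt)).trans_lt hxy⟩
    · exact ⟨x, by simp, hxy⟩
  · rw [h2 j hjq] at hz
    obtain ⟨w, hw, hwz⟩ := h j z hz
    by_cases hj : j = a.length
    · subst hj
      exact ⟨x, by simp, by simp at hw; omega⟩
    · refine ⟨w, ?_, hwz⟩
      rw [getElem?_append_cons] at *
      simpa [hj] using hw

lemma RowAbove.unbump {a b s s' : List ℕ} {x y : ℕ} (h : RowAbove (a ++ x :: b) s')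
    (hb : ∀ z ∈ b, y ≤ z) (hs : RowStep s y s') :
    RowAbove (a ++ y :: b) s := by
  obtain ⟨q, hq, h1, h2, h3, h4⟩ := hs
  have hqa : q ≤ a.length := by
    by_contra! hlt
    obtain ⟨w, hw, hlt'⟩ := h _ _ h1
    rw [getElem?_append_cons, if_neg (by omega), if_neg (by omega)] at hw
    exact absurd (hb w (List.mem_of_getElem? hw)) (by omega)
  intro j z hz
  by_cases hj : j = a.length
  · subst hj
    exact ⟨y, by simp, h4 _ z hqa hz⟩
  obtain ⟨w, hw, hwz⟩ : ∃ w, (a ++ x :: b)[j]? = some w ∧ w < z := by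
    by_cases hjq : j = q
    · subst hjq
      obtain ⟨w, hw, hwy⟩ := h _ _ h1
      exact ⟨w, hw, hwy.trans (h4 _ z le_rfl hz)⟩
    · exact h j z (by rw [h2 j hjq, hz])
  refine ⟨w, ?_, hwz⟩
  rw [getElem?_append_cons] at *
  simpa [hj] using hw

lemma RowAbove.append {r s : List ℕ} (h : RowAbove r s) (x : ℕ) : RowAbove (r ++ [x]) s := by
  intro j z hz
  obtain ⟨w, hw, hwz⟩ := h j z hz
  exact ⟨w, by grind, hwz⟩

lemma RowAbove.of_append {r s : List ℕ} {x : ℕ} (h : RowAbove (r ++ [x]) s)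
    (hlen : s.length ≤ r.length) : RowAbove r s := by
  intro j z hz
  obtain ⟨w, hw, hwz⟩ := h j z hz
  exact ⟨w, by grind, hwz⟩

lemma RowInsertion.isSemistandard {T T' : List (List ℕ)} {x : ℕ} (h : RowInsertion T x T')
    (hT : IsSemistandard T) : IsSemistandard T' := by
  induction h with
  | nil => simp [IsSemistandard, rowAbove_nil]
  | @append r T x hr =>
    obtain ⟨-, h2, h3, h4⟩ := hT
    refine ⟨by simp, ?_, h3.append x, h4⟩
    simpa [List.pairwise_append] using ⟨h2, hr⟩
  | @bump a b T T' x y ha hxy hb hins ih =>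
    obtain ⟨-, h2, h3, h4⟩ := hT
    refine ⟨by simp, ?_, h3.bump ha hxy hins.rowStep, ih h4⟩
    simp only [List.pairwise_append, List.pairwise_cons] at h2 ⊢
    grind

lemma List.Pairwise.exists_split {r : List ℕ} (hr : r.Pairwise (· ≤ ·)) (x : ℕ) :
    ∃ a b, r = a ++ b ∧ (∀ z ∈ a, z ≤ x) ∧ ∀ z ∈ b, x < z := by
  induction r with
  | nil => exact ⟨[], [], by simp⟩
  | cons y r ih =>
    rw [List.pairwise_cons] at hr
    obtain ⟨a, b, rfl, ha, hb⟩ := ih hr.2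
    by_cases hy : y ≤ x
    · exact ⟨y :: a, b, by simp, by grind, hb⟩
    · exact ⟨[], y :: (a ++ b), by simp, by simp, by grind⟩

lemma append_split_unique {a b a' b' : List ℕ} (p : ℕ → Prop) (h : a ++ b = a' ++ b')
    (ha : ∀ z ∈ a, p z) (hb : ∀ z ∈ b, ¬ p z) (ha' : ∀ z ∈ a', p z) (hb' : ∀ z ∈ b', ¬ p z) :
    a = a' ∧ b = b' := by
  induction a generalizing a' with
  | nil =>
    cases a' with
    | nil => exact ⟨rfl, h⟩
    | cons z a' => exact absurd (ha' z (by simp)) (hb z (by simp_all))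
  | cons x a ih =>
    cases a' with
    | nil => exact absurd (ha x (by simp)) (hb' x (by simp [← show _ = b' from h]))
    | cons x' a' =>
      simp only [List.cons_append, List.cons.injEq] at h
      obtain ⟨rfl, rfl⟩ := ih h.2 (fun z hz => ha z (by simp [hz])) fun z hz => ha' z (by simp [hz])
      simp [h.1]

lemma exists_rowInsertion {T : List (List ℕ)} (hT : IsSemistandard T) (x : ℕ) :
    ∃ T', RowInsertion T x T' := by
  induction T generalizing x with
  | nil => exact ⟨_, .nil x⟩
  | cons r T ih =>
    obtain ⟨-, h2, -, h4⟩ := hT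
    obtain ⟨a, b, rfl, ha, hb⟩ := h2.exists_split x
    cases b with
    | nil => exact ⟨_, .append (by simpa using ha)⟩
    | cons y b =>
      obtain ⟨T', hT'⟩ := ih h4 y
      rw [List.pairwise_append, List.pairwise_cons] at h2
      exact ⟨_, .bump ha (hb y (by simp)) h2.2.1.1 hT'⟩

lemma RowInsertion.right_unique {T T₁ T₂ : List (List ℕ)} {x : ℕ} (h₁ : RowInsertion T x T₁)
    (h₂ : RowInsertion T x T₂) : T₁ = T₂ := by
  induction h₁ generalizing T₂ with
  | nil => cases h₂; rfl
  | append hr =>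
    cases h₂ with
    | append => rfl
    | bump _ hxy => exact absurd (hr _ (by simp)) hxy.not_ge
  | @bump a b T T' x y ha hxy hb hT ih =>
    generalize hr : a ++ y :: b = r at h₂
    cases h₂ with
    | append hr' => exact absurd (hr' y (by simp [← hr])) hxy.not_ge
    | @bump a' b' _ _ _ y' ha' hxy' hb' hT' =>
      obtain ⟨rfl, h⟩ := append_split_unique (· ≤ x) hr ha
        (by simpa [hxy] using fun z hz => hxy.trans_le (hb z hz)) ha'
        (by simpa [hxy'] using fun z hz => hxy'.trans_le (hb' z hz))
      obtain ⟨rfl, rfl⟩ := List.cons.inj h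
      rw [ih hT']

lemma RowInsertion.left_unique {T₁ T₂ T' : List (List ℕ)} {x₁ x₂ : ℕ}
    (h₁ : RowInsertion T₁ x₁ T') (h₂ : RowInsertion T₂ x₂ T')
    (hshape : shapeT T₁ = shapeT T₂) : T₁ = T₂ ∧ x₁ = x₂ := by
  induction h₁ generalizing T₂ x₂ with
  | nil =>
    have : T₂ = [] := by simpa [shapeT, eq_comm] using hshape
    subst this
    cases h₂
    simp
  | @append r T x hr =>
    generalize hr' : r ++ [x] = r' at h₂
    cases h₂ with
    | nil => simp [shapeT] at hshape
    | append => simpa using hr'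
    | bump =>
      have := congrArg List.length hr'
      simp [shapeT] at hshape this
      omega
  | @bump a b T T' x y ha hxy hb hT ih =>
    generalize hr : a ++ x :: b = r at h₂
    cases h₂ with
    | nil => simp [shapeT] at hshape
    | append =>
      have := congrArg List.length hr
      simp [shapeT] at hshape this
      omega
    | @bump a' b' _ _ _ y' ha' hxy' hb' hT' =>
      obtain ⟨rfl, rfl⟩ := ih hT' (by simpa [shapeT] using (List.cons.inj hshape).2)
      have hlt : ∀ z ∈ a ++ [x], z < y := by
        simpa [or_imp, forall_and, hxy] using fun z hz => (ha z hz).trans_lt hxy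
      have hlt' : ∀ z ∈ a' ++ [x₂], z < y := by
        simpa [or_imp, forall_and, hxy'] using fun z hz => (ha' z hz).trans_lt hxy'
      obtain ⟨h, rfl⟩ := append_split_unique (· < y) (by simpa using hr) hlt (by simpa using hb)
        hlt' (by simpa using hb')
      obtain ⟨rfl, h⟩ := List.append_inj' h rfl
      simpa using h

lemma List.Pairwise.exists_unbump_split {r : List ℕ} {y w : ℕ} (hr : r.Pairwise (· ≤ ·))
    (hw : w ∈ r) (hwy : w < y) :
    ∃ a x b, r = a ++ x :: b ∧ (∀ z ∈ a, z ≤ x) ∧ x < y ∧ ∀ z ∈ b, y ≤ z := by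
  obtain ⟨a, b, rfl, ha, hb⟩ := hr.exists_split (y - 1)
  rcases List.eq_nil_or_concat a with rfl | ⟨a, x, rfl⟩
  · grind
  · refine ⟨a, x, b, by simp, ?_, by grind, by grind⟩
    simp only [List.concat_eq_append, List.pairwise_append] at hr
    grind

lemma AddBox.exists_rowInsertion {Q Q' P' : List (List ℕ)} {n : ℕ} (h : AddBox Q n Q')
    (hQ : IsSemistandard Q) (hP' : IsSemistandard P') (hshape : shapeT P' = shapeT Q') :
    ∃ P x, RowInsertion P x P' ∧ IsSemistandard P ∧ shapeT P = shapeT Q := by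
  induction h generalizing P' with
  | nil =>
    match P', hshape with
    | [[x]], _ => exact ⟨[], x, .nil x, trivial, rfl⟩
  | head r T n =>
    match P', hP', hshape with
    | r' :: U, hP', hshape =>
      obtain ⟨h1, h2, h3, h4⟩ := hP'
      obtain ⟨g1, -, g3, -⟩ := hQ
      simp only [shapeT, List.map_cons, List.cons.injEq, List.length_append,
        List.length_singleton] at hshape
      rcases List.eq_nil_or_concat r' with rfl | ⟨s, x, rfl⟩
      · simp at h1
      simp only [List.concat_eq_append, List.length_append, List.length_singleton,
        List.pairwise_append] at *
      have hs : s.length = r.length := by omega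
      refine ⟨s :: U, x, .append (by simpa using h2.2.2), ⟨?_, h2.1, h3.of_append ?_, h4⟩, ?_⟩
      · rw [← List.length_pos_iff, hs]
        exact List.length_pos_iff.2 g1
      · rw [hs]
        have hlen : (U.headD []).length = (T.headD []).length := by
          cases U <;> cases T <;> simp_all
        exact hlen ▸ g3.length_le
      · simp [shapeT, hs, hshape.2]
  | @cons r T T' n hT ih =>
    match P', hP', hshape with
    | r' :: U', hP', hshape =>
      obtain ⟨h1, h2, h3, h4⟩ := hP'
      simp only [shapeT, List.map_cons, List.cons.injEq] at hshape
      obtain ⟨U, y, hins, hU, hUT⟩ := ih hQ.2.2.2 h4 hshape.2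
      obtain ⟨q, -, hq, -⟩ := hins.rowStep
      obtain ⟨w, hw, hwy⟩ := h3 _ _ hq
      obtain ⟨a, x, b, rfl, ha, hxy, hb⟩ :=
        h2.exists_unbump_split (List.mem_of_getElem? hw) hwy
      refine ⟨(a ++ y :: b) :: U, x, .bump ha hxy hb hins,
        ⟨by simp, ?_, h3.unbump hb hins.rowStep, hU⟩, ?_⟩
      · simp only [List.pairwise_append, List.pairwise_cons] at h2 ⊢
        grind
      · simpa [shapeT] using And.intro hshape.1 hUT

lemma AddBox.headD {Q Q' : List (List ℕ)} {n : ℕ} (h : AddBox Q n Q') :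
    Q'.headD [] = Q.headD [] ∨ Q'.headD [] = Q.headD [] ++ [n] := by
  cases h <;> simp

lemma shapeT_headD {P Q : List (List ℕ)} (h : shapeT P = shapeT Q) :
    (P.headD []).length = (Q.headD []).length := by
  cases P <;> cases Q <;> simp_all [shapeT]

lemma RowInsertion.exists_addBox {P P' Q : List (List ℕ)} {x n : ℕ} (h : RowInsertion P x P')
    (hP' : IsSemistandard P') (hQ : IsSemistandard Q) (hshape : shapeT P = shapeT Q)
    (hn : ∀ z ∈ Q.flatten, z < n) :
    ∃ Q', AddBox Q n Q' ∧ IsSemistandard Q' ∧ shapeT P' = shapeT Q' := by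
  induction h generalizing Q with
  | nil =>
    have : Q = [] := by simpa [shapeT, eq_comm] using hshape
    subst this
    exact ⟨_, .nil n, by simp [IsSemistandard, rowAbove_nil], rfl⟩
  | append =>
    match Q, hshape with
    | s :: U, hshape =>
      obtain ⟨-, g2, g3, g4⟩ := hQ
      simp only [shapeT, List.map_cons, List.cons.injEq] at hshape
      refine ⟨_, .head s U n, ⟨by simp, ?_, g3.append n, g4⟩, by simp [shapeT, hshape]⟩
      rw [List.pairwise_append]
      exact ⟨g2, by simp, by simpa using fun z hz => (hn z (by simp [hz])).le⟩
  | @bump a b T T' x y ha hxy hb hins ih =>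
    match Q, hshape with
    | s :: U, hshape =>
      obtain ⟨g1, g2, g3, g4⟩ := hQ
      obtain ⟨-, -, h3, h4⟩ := hP'
      simp only [shapeT, List.map_cons, List.cons.injEq] at hshape
      obtain ⟨U', hadd, hU', hshape'⟩ := ih h4 g4 hshape.2
        fun z hz => hn z (List.mem_append_right s hz)
      refine ⟨_, .cons s hadd, ⟨g1, g2, ?_, hU'⟩, ?_⟩
      · have hlen := h3.length_le
        rw [shapeT_headD hshape'] at hlen
        rcases hadd.headD with h | h
        · rwa [h]
        · intro j z hz
          have hj : j < s.length := by grind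
          by_cases hj' : j < (U.headD []).length
          · exact g3 j z (by grind)
          · refine ⟨s[j], by simp [hj], ?_⟩
            obtain rfl : z = n := by grind
            exact hn _ (List.mem_append_left _ (List.getElem_mem hj))
      · simpa [shapeT] using And.intro hshape.1 hshape'

lemma AddBox.right_unique {Q Q₁ Q₂ : List (List ℕ)} {n : ℕ} (h₁ : AddBox Q n Q₁)
    (h₂ : AddBox Q n Q₂) (hshape : shapeT Q₁ = shapeT Q₂) : Q₁ = Q₂ := by
  induction h₁ generalizing Q₂ with
  | nil => cases h₂; rfl
  | head => cases h₂ <;> simp_all [shapeT]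
  | cons r hT ih =>
    cases h₂ with
    | head => simp [shapeT] at hshape
    | cons _ hT' => rw [ih hT' (List.cons.inj hshape).2]

lemma AddBox.left_unique {Q₁ Q₂ Q' : List (List ℕ)} {n : ℕ} (h₁ : AddBox Q₁ n Q')
    (h₂ : AddBox Q₂ n Q') (hQ₁ : IsSemistandard Q₁) (hQ₂ : IsSemistandard Q₂)
    (hn : Q'.flatten.Nodup) : Q₁ = Q₂ := by
  induction h₁ generalizing Q₂ with
  | nil n =>
    generalize hs : [n] = s at h₂
    cases h₂ with
    | nil => rfl
    | head => exact absurd (by simpa using hs) hQ₂.1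
    | cons _ h => nomatch h
  | head r T n =>
    generalize hs : r ++ [n] = s at h₂
    cases h₂ with
    | nil => simp_all [IsSemistandard]
    | head => simp_all
    | cons _ h =>
      have := h.perm.mem_iff (a := n)
      grind
  | cons r hT ih =>
    cases h₂ with
    | nil => cases hT
    | head =>
      have := hT.perm.mem_iff (a := ‹ℕ›)
      grind
    | cons _ hT' => rw [ih hT' hQ₁.2.2.2 hQ₂.2.2.2 (by grind)]

lemma IsSemistandard.exists_addBox {Q' : List (List ℕ)} {n : ℕ} (hQ' : IsSemistandard Q')
    (hmem : n ∈ Q'.flatten) (hle : ∀ z ∈ Q'.flatten, z ≤ n) (hnodup : Q'.flatten.Nodup) :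
    ∃ Q, AddBox Q n Q' ∧ IsSemistandard Q := by
  induction Q' with
  | nil => simp at hmem
  | cons r T ih =>
    obtain ⟨h1, h2, h3, h4⟩ := hQ'
    simp only [List.flatten_cons, List.nodup_append] at hnodup
    by_cases hr : n ∈ r
    · rcases List.eq_nil_or_concat r with rfl | ⟨s, x, rfl⟩
      · simp at h1
      simp only [List.concat_eq_append, List.pairwise_append] at *
      obtain rfl : x = n := by grind
      have hlen : (T.headD []).length ≤ s.length := by
        by_contra! hlt
        obtain ⟨w, hw, hwz⟩ := h3 _ _ (List.getElem?_eq_getElem hlt)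
        cases T with
        | nil => simp at hlt
        | cons t T =>
          have := hle ((t :: T).headD [])[s.length] (by simp)
          grind
      by_cases hs : s = []
      · subst hs
        cases T with
        | nil => exact ⟨_, .nil x, trivial⟩
        | cons t T => exact absurd (List.length_eq_zero_iff.1 (Nat.le_zero.1 hlen)) h4.1
      · exact ⟨_, .head s T x, hs, h2.1, h3.of_append hlen, h4⟩
    · obtain ⟨Q, hQ, hQs⟩ := ih h4 (by simpa [hr] using hmem)
        (fun z hz => hle z (List.mem_append_right r hz)) hnodup.2.1
      refine ⟨_, .cons r hQ, h1, h2, ?_, hQs⟩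
      intro j z hz
      refine h3 j z ?_
      rcases hQ.headD with h | h <;> grind

lemma RSK.invariants {w : List ℕ} {P Q : List (List ℕ)} (h : RSK w P Q) :
    IsSemistandard P ∧ IsSemistandard Q ∧ shapeT P = shapeT Q ∧ P.flatten.Perm w ∧
      Q.flatten.Perm (List.range' 1 w.length) := by
  induction h with
  | nil => simp [IsSemistandard]
  | @cons w P Q P' Q' x h hP hQ hshape ih =>
    obtain ⟨i1, i2, i3, i4, i5⟩ := ih
    have hP' := hP.isSemistandard i1
    obtain ⟨Q₂, hadd, hQ₂, hs⟩ := hP.exists_addBox (n := w.length + 1) hP' i2 i3 (by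
      intro z hz
      have := i5.mem_iff.1 hz
      simp only [List.mem_range'_1] at this
      omega)
    obtain rfl := hQ.right_unique hadd (hshape ▸ hs)
    refine ⟨hP', hQ₂, hshape, hP.perm.trans (i4.cons x), hQ.perm.trans ?_⟩
    rw [List.length_cons, List.range'_1_concat, Nat.add_comm 1]
    exact (i5.cons _).trans (List.perm_append_singleton _ _).symm

lemma exists_rsk (w : List ℕ) : ∃ P Q, RSK w P Q := by
  induction w with
  | nil => exact ⟨_, _, .nil⟩
  | cons x w ih =>
    obtain ⟨P, Q, h⟩ := ih
    obtain ⟨i1, i2, i3, i4, i5⟩ := h.invariants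
    obtain ⟨P', hP⟩ := exists_rowInsertion i1 x
    obtain ⟨Q', hQ, -, hs⟩ := hP.exists_addBox (n := w.length + 1) (hP.isSemistandard i1) i2 i3 (by
      intro z hz
      have := i5.mem_iff.1 hz
      simp only [List.mem_range'_1] at this
      omega)
    exact ⟨P', Q', .cons h hP hQ hs⟩

lemma RSK.length_eq {w w' : List ℕ} {P Q : List (List ℕ)} (h : RSK w P Q) (h' : RSK w' P Q) :
    w.length = w'.length :=
  (h.invariants.2.2.2.1.symm.trans h'.invariants.2.2.2.1).length_eq

lemma RSK.left_unique {w w' : List ℕ} {P Q : List (List ℕ)} (h : RSK w P Q) (h' : RSK w' P Q) :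
    w = w' := by
  induction h generalizing w' with
  | nil => simpa [eq_comm] using RSK.nil.length_eq h'
  | @cons w P Q P' Q' x h hP hQ hshape ih =>
    have hlen := (RSK.cons h hP hQ hshape).length_eq h'
    have hnodup := (RSK.cons h hP hQ hshape).invariants.2.2.2.2.nodup_iff.2 List.nodup_range'
    cases h' with
    | nil => simp at hlen
    | @cons w₂ P₂ Q₂ _ _ x₂ h₂ hP₂ hQ₂ _ =>
      obtain ⟨-, i2, i3, -⟩ := h.invariants
      obtain ⟨-, j2, j3, -⟩ := h₂.invariants
      simp only [List.length_cons, Nat.add_right_cancel_iff] at hlen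
      rw [← hlen] at hQ₂
      obtain rfl := hQ.left_unique hQ₂ i2 j2 hnodup
      obtain ⟨rfl, rfl⟩ := hP.left_unique hP₂ (i3.trans j3.symm)
      rw [ih h₂]

lemma exists_word_rsk {n : ℕ} {P Q : List (List ℕ)} (hP : IsSemistandard P)
    (hQ : IsSemistandard Q) (hshape : shapeT P = shapeT Q)
    (hperm : Q.flatten.Perm (List.range' 1 n)) : ∃ w, RSK w P Q ∧ w.length = n := by
  induction n generalizing P Q with
  | zero =>
    have hQnil : Q = [] := by
      cases Q with
      | nil => rfl
      | cons r T => simp_all [IsSemistandard]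
    subst hQnil
    have : P = [] := by simpa [shapeT] using hshape
    subst this
    exact ⟨[], .nil, rfl⟩
  | succ n ih =>
    have hmem : ∀ z, z ∈ Q.flatten ↔ 1 ≤ z ∧ z < 1 + (n + 1) := fun z => by
      rw [hperm.mem_iff, List.mem_range'_1]
    obtain ⟨Q₀, hadd, hQ₀⟩ := hQ.exists_addBox (n := n + 1) ((hmem _).2 (by omega))
      (fun z hz => by have := (hmem z).1 hz; omega) (hperm.nodup_iff.2 List.nodup_range')
    obtain ⟨P₀, x, hins, hP₀, hs⟩ := hadd.exists_rowInsertion hQ₀ hP hshape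
    have hperm₀ : Q₀.flatten.Perm (List.range' 1 n) := by
      have := hadd.perm.symm.trans hperm
      rw [List.range'_1_concat, Nat.add_comm 1] at this
      exact (this.trans (List.perm_append_singleton _ _)).cons_inv
    obtain ⟨w, hw, rfl⟩ := ih hP₀ hQ₀ hs hperm₀
    exact ⟨x :: w, .cons hw hins hadd hshape, rfl⟩

/-- Schensted's invariant: the `j`-th entry of the first row is the smallest final letter of a
weakly increasing subsequence of length `j + 1` (words are reversed here). -/
lemma RSK.firstRow {w : List ℕ} {P Q : List (List ℕ)} (h : RSK w P Q) :
    (∀ j z, (P.headD [])[j]? = some z →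
      ∃ s, (z :: s).Sublist w ∧ (z :: s).Pairwise (· ≥ ·) ∧ s.length = j) ∧
    (∀ z s, (z :: s).Sublist w → (z :: s).Pairwise (· ≥ ·) →
      ∃ y, (P.headD [])[s.length]? = some y ∧ y ≤ z) := by
  induction h with
  | nil => simp
  | @cons w P Q P' Q' x h hP hQ hshape ih =>
    obtain ⟨ih1, ih2⟩ := ih
    obtain ⟨q, hq, h1, h2, h3, h4⟩ := hP.rowStep
    constructor
    · intro j z hz
      by_cases hj : j = q
      · subst hj
        obtain rfl : x = z := Option.some.inj (h1.symm.trans hz)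
        cases j with
        | zero => exact ⟨[], by simp, by simp, rfl⟩
        | succ j =>
          have hp := List.getElem?_eq_getElem (Nat.lt_of_succ_le hq)
          obtain ⟨s, hs1, hs2, rfl⟩ := ih1 _ _ hp
          have := h3 _ _ (Nat.lt_succ_self _) hp
          refine ⟨_, hs1.cons_cons x, ?_, rfl⟩
          refine List.pairwise_cons.2 ⟨?_, hs2⟩
          intro z' hz'
          rcases List.mem_cons.1 hz' with rfl | hz'
          · exact this
          · exact (List.rel_of_pairwise_cons hs2 hz').trans this
      · rw [h2 j hj] at hz
        obtain ⟨s, hs1, hs2, hs3⟩ := ih1 j z hz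
        exact ⟨s, hs1.cons x, hs2, hs3⟩
    · intro z s hs hpw
      cases hs with
      | cons _ hs =>
        obtain ⟨y, hy, hyz⟩ := ih2 z s hs hpw
        by_cases hj : s.length = q
        · exact ⟨x, hj ▸ h1, by have := h4 _ y hj.ge hy; omega⟩
        · exact ⟨y, by rw [h2 _ hj, hy], hyz⟩
      | cons_cons _ hs =>
        have hle : s.length ≤ q := by
          cases s with
          | nil => simp
          | cons z' s =>
            obtain ⟨y, hy, hyz⟩ := ih2 z' s hs hpw.of_cons
            by_contra! hlt
            have := h4 _ y (Nat.le_of_lt_succ hlt) hy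
            grind
        rcases hle.eq_or_lt with hj | hj
        · exact ⟨_, hj ▸ h1, le_rfl⟩
        · have hp := List.getElem?_eq_getElem (hj.trans_le hq)
          exact ⟨_, by rw [h2 _ hj.ne, hp], h3 _ _ hj hp⟩

lemma numCols_eq (T : List (List ℕ)) : numCols T = (T.headD []).length := by
  cases T <;> simp [numCols]

/-- Schensted's theorem, for weakly increasing subsequences of reversed words. -/
lemma RSK.numCols_le_iff {w : List ℕ} {P Q : List (List ℕ)} (h : RSK w P Q) (d : ℕ) :
    numCols P ≤ d ↔ ∀ s : List ℕ, s.Sublist w → s.Pairwise (· ≥ ·) → s.length ≤ d := by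
  obtain ⟨h1, h2⟩ := h.firstRow
  rw [numCols_eq]
  constructor
  · intro hd s hs hpw
    cases s with
    | nil => simp
    | cons z s =>
      obtain ⟨y, hy, -⟩ := h2 z s hs hpw
      have := (List.getElem?_eq_some_iff.1 hy).1
      grind
  · intro hd
    by_contra! hlt
    obtain ⟨s, hs, hpw, hlen⟩ := h1 d _ (List.getElem?_eq_getElem hlt)
    have := hd _ hs hpw
    grind

lemma rowAbove_iff {r s : List ℕ} :
    RowAbove r s ↔ s.length ≤ r.length ∧ ∀ j < s.length, r.getD j 0 < s.getD j 0 := by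
  constructor
  · refine fun h => ⟨h.length_le, fun j hj => ?_⟩
    obtain ⟨w, hw, hwz⟩ := h j _ (List.getElem?_eq_getElem hj)
    simpa [List.getD_eq_getElem?_getD, hw, hj] using hwz
  · rintro ⟨hlen, h⟩ j z hz
    obtain ⟨hj, rfl⟩ := List.getElem?_eq_some_iff.1 hz
    refine ⟨r[j], by simp, ?_⟩
    simpa [List.getD_eq_getElem?_getD, hj, hj.trans_le hlen] using h j hj

lemma isSYT_cons_iff_of_nodup {r : List ℕ} {T : List (List ℕ)} (hr : r.Nodup) :
    ([] ∉ r :: T ∧ List.IsChain (fun a b => b.length ≤ a.length) (r :: T) ∧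
      (∀ s ∈ r :: T, List.IsChain (· < ·) s) ∧
      (∀ i j : ℕ, j < ((r :: T).getD (i + 1) []).length →
        ((r :: T).getD i []).getD j 0 < ((r :: T).getD (i + 1) []).getD j 0)) ↔
    (r ≠ [] ∧ r.Pairwise (· ≤ ·) ∧ RowAbove r (T.headD [])) ∧
    [] ∉ T ∧ List.IsChain (fun a b => b.length ≤ a.length) T ∧
      (∀ s ∈ T, List.IsChain (· < ·) s) ∧
      (∀ i j : ℕ, j < (T.getD (i + 1) []).length →
        (T.getD i []).getD j 0 < (T.getD (i + 1) []).getD j 0) := by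
  have hsort : List.IsChain (· < ·) r ↔ r.Pairwise (· ≤ ·) := by
    rw [List.isChain_iff_pairwise]
    refine ⟨fun h => h.imp le_of_lt, fun h => ?_⟩
    exact (h.and hr).imp fun h => lt_of_le_of_ne h.1 h.2
  have hlen : List.IsChain (fun a b : List ℕ => b.length ≤ a.length) (r :: T) ↔
      (T.headD []).length ≤ r.length ∧ List.IsChain (fun a b => b.length ≤ a.length) T := by
    cases T <;> simp
  have hcol : (∀ i j : ℕ, j < ((r :: T).getD (i + 1) []).length →
      ((r :: T).getD i []).getD j 0 < ((r :: T).getD (i + 1) []).getD j 0) ↔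
      (∀ j < (T.headD []).length, r.getD j 0 < (T.headD []).getD j 0) ∧
      (∀ i j : ℕ, j < (T.getD (i + 1) []).length →
        (T.getD i []).getD j 0 < (T.getD (i + 1) []).getD j 0) := by
    have h0 : T.headD [] = T.getD 0 [] := by cases T <;> simp
    rw [h0]
    refine ⟨fun h => ⟨h 0, fun i => h (i + 1)⟩, fun h i => ?_⟩
    cases i with
    | zero => exact h.1
    | succ i => exact h.2 i
  rw [hlen, hcol, rowAbove_iff, List.forall_mem_cons, hsort, List.mem_cons, not_or, ne_comm]
  tauto

lemma isSYT_iff {m : ℕ} {T : List (List ℕ)} :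
    isSYT m T ↔ IsSemistandard T ∧ T.flatten.Perm (List.range' 1 m) := by
  suffices h : T.flatten.Nodup → (([] ∉ T ∧ List.IsChain (fun a b => b.length ≤ a.length) T ∧
      (∀ s ∈ T, List.IsChain (· < ·) s) ∧
      (∀ i j : ℕ, j < (T.getD (i + 1) []).length →
        (T.getD i []).getD j 0 < (T.getD (i + 1) []).getD j 0)) ↔ IsSemistandard T) by
    constructor
    · rintro ⟨h1, h2, h3, h4, h5⟩
      exact ⟨(h (h5.nodup_iff.2 List.nodup_range')).1 ⟨h1, h2, h3, h4⟩, h5⟩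
    · rintro ⟨hT, h5⟩
      obtain ⟨h1, h2, h3, h4⟩ := (h (h5.nodup_iff.2 List.nodup_range')).2 hT
      exact ⟨h1, h2, h3, h4, h5⟩
  induction T with
  | nil => simp [IsSemistandard]
  | cons r T ih =>
    intro hnodup
    rw [List.flatten_cons, List.nodup_append] at hnodup
    rw [isSYT_cons_iff_of_nodup hnodup.1, ih hnodup.2.1]
    simp only [IsSemistandard]
    tauto

lemma RSK.right_unique {w : List ℕ} {P₁ Q₁ P₂ Q₂ : List (List ℕ)} (h₁ : RSK w P₁ Q₁)
    (h₂ : RSK w P₂ Q₂) : P₁ = P₂ ∧ Q₁ = Q₂ := by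
  induction h₁ generalizing P₂ Q₂ with
  | nil => cases h₂; simp
  | cons h hP hQ hshape ih =>
    cases h₂ with
    | cons h' hP' hQ' hshape' =>
      obtain ⟨rfl, rfl⟩ := ih h'
      obtain rfl := hP.right_unique hP'
      exact ⟨rfl, hQ.right_unique hQ' (hshape.symm.trans hshape')⟩

lemma permList_perm {m : ℕ} (σ : Equiv.Perm (Fin m)) :
    (permList σ).Perm (List.range' 1 m) := by
  rw [List.perm_ext_iff_of_nodup _ List.nodup_range']
  · intro a
    simp only [permList, List.mem_map, List.mem_finRange, true_and, List.mem_range'_1]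
    constructor
    · rintro ⟨i, rfl⟩
      omega
    · intro ha
      exact ⟨σ.symm ⟨a - 1, by omega⟩, by simp; omega⟩
  · refine (List.nodup_finRange m).map fun i j hij => ?_
    exact σ.injective (Fin.ext (by simpa using hij))

lemma permList_injective {m : ℕ} : Function.Injective (permList (m := m)) := by
  intro σ τ h
  ext i
  simpa using List.map_inj_left.1 h i (List.mem_finRange i)

lemma exists_permList_eq {m : ℕ} {l : List ℕ} (hl : l.Perm (List.range' 1 m)) :
    ∃ σ : Equiv.Perm (Fin m), permList σ = l := by
  have hlen : l.length = m := by simpa using hl.length_eq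
  have hmem : ∀ z ∈ l, 1 ≤ z ∧ z < 1 + m := fun z hz => by simpa using hl.mem_iff.1 hz
  have hnodup : l.Nodup := hl.nodup_iff.2 List.nodup_range'
  subst hlen
  have hget : ∀ i : Fin l.length, 1 ≤ l[i] ∧ l[i] < 1 + l.length :=
    fun i => hmem _ (List.getElem_mem i.2)
  let f : Fin l.length → Fin l.length := fun i => ⟨l[i] - 1, by have := hget i; omega⟩
  have hf : Function.Injective f := by
    intro i j hij
    have := hget i
    have := hget j
    have hij' : l[i] = l[j] := by
      simp only [f, Fin.mk.injEq] at hij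
      omega
    exact Fin.ext ((hnodup.getElem_inj_iff).1 hij')
  refine ⟨Equiv.ofBijective f hf.bijective_of_finite, ?_⟩
  refine List.ext_getElem (by simp [permList]) fun i h₁ h₂ => ?_
  have := hget ⟨i, h₂⟩
  simp only [Fin.getElem_fin] at this
  simp [permList, f]
  omega

lemma permList_increasing_iff {m : ℕ} (σ : Equiv.Perm (Fin m)) (d : ℕ) :
    (∀ (L : ℕ) (t : Fin L → Fin m), StrictMono t → StrictMono (fun j => σ (t j)) → L ≤ d) ↔
      ∀ s : List ℕ, s.Sublist (permList σ).reverse → s.Pairwise (· ≥ ·) → s.length ≤ d := by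
  constructor
  · intro h s hs hpw
    have hs' : s.reverse.Sublist (permList σ) := by simpa using hs.reverse
    obtain ⟨u, hu, hsu⟩ := List.sublist_map_iff.1 hs'
    have hlen : s.length = u.length := by simpa using congrArg List.length hsu
    have hlt : u.Pairwise (· < ·) := (List.pairwise_lt_finRange m).sublist hu
    have hle : u.Pairwise (fun i j => σ i ≤ σ j) := by
      have : (u.map fun i => (σ i : ℕ) + 1).Pairwise (· ≤ ·) := by
        rw [← hsu, List.pairwise_reverse]
        exact hpw
      simpa [List.pairwise_map] using this
    rw [hlen]
    refine h u.length (fun i => u[i]) (fun i j hij => ?_) (fun i j hij => ?_)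
    · exact List.pairwise_iff_getElem.1 hlt i j i.2 j.2 hij
    · refine lt_of_le_of_ne (List.pairwise_iff_getElem.1 hle i j i.2 j.2 hij) fun he => ?_
      exact (List.pairwise_iff_getElem.1 hlt i j i.2 j.2 hij).ne (σ.injective he)
  · intro h L t ht hσt
    have hsub : (List.ofFn t).Sublist (List.finRange m) := by
      refine List.sublist_of_subperm_of_pairwise (r := (· < ·)) ?_ ?_ (List.pairwise_lt_finRange m)
      · exact (List.nodup_ofFn.2 ht.injective).subperm fun _ _ => List.mem_finRange _
      · exact List.pairwise_ofFn.2 fun i j hij => ht hij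
    have hpw : ((List.ofFn t).map fun i => (σ i : ℕ) + 1).Pairwise (· ≤ ·) := by
      simpa [List.pairwise_map, List.pairwise_ofFn] using fun i j hij => (hσt hij).le
    simpa using h _ (hsub.map _).reverse (List.pairwise_reverse.2 hpw)

/-- The number of permutations of `[m]` with no increasing subsequence of length
greater than `d` equals the number of pairs of equal-shape standard Young
tableaux with entries `[m]` and at most `d` columns. -/
theorem card_perms_no_long_increasing_eq_card_tableau_pairs (m d : ℕ) :
    Nat.card {σ : Equiv.Perm (Fin m) //
        ∀ (L : ℕ) (t : Fin L → Fin m), StrictMono t →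
          StrictMono (fun j => σ (t j)) → L ≤ d} =
    Nat.card {PQ : List (List ℕ) × List (List ℕ) //
        isSYT m PQ.1 ∧ isSYT m PQ.2 ∧ shapeT PQ.1 = shapeT PQ.2 ∧
        numCols PQ.1 ≤ d ∧ numCols PQ.2 ≤ d} := by
  choose P Q hPQ using fun σ : Equiv.Perm (Fin m) => exists_rsk (permList σ).reverse
  have hrev (σ : Equiv.Perm (Fin m)) : (permList σ).reverse.Perm (List.range' 1 m) :=
    (List.reverse_perm _).trans (permList_perm σ)
  have hcols (σ : Equiv.Perm (Fin m)) := (permList_increasing_iff σ d).trans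
    ((hPQ σ).numCols_le_iff d).symm
  have hnumCols {P Q : List (List ℕ)} (h : shapeT P = shapeT Q) : numCols P = numCols Q := by
    rw [numCols_eq, numCols_eq, shapeT_headD h]
  refine Nat.card_eq_of_bijective (fun σ => ⟨(P σ.1, Q σ.1), ?_⟩) ⟨?_, ?_⟩
  · obtain ⟨hP, hQ, hshape, hpermP, hpermQ⟩ := (hPQ σ.1).invariants
    have hd := (hcols σ.1).1 σ.2
    refine ⟨isSYT_iff.2 ⟨hP, hpermP.trans (hrev σ.1)⟩, isSYT_iff.2 ⟨hQ, ?_⟩, hshape, hd,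
      hnumCols hshape ▸ hd⟩
    simpa [(hrev σ.1).length_eq] using hpermQ
  · intro σ τ h
    obtain ⟨hP, hQ⟩ := Prod.ext_iff.1 (Subtype.ext_iff.1 h)
    have hτ := hPQ τ.1
    rw [← show P σ.1 = P τ.1 from hP, ← show Q σ.1 = Q τ.1 from hQ] at hτ
    exact Subtype.ext (permList_injective (List.reverse_injective ((hPQ σ.1).left_unique hτ)))
  · rintro ⟨⟨P₀, Q₀⟩, hP, hQ, hshape, hd, -⟩
    rw [isSYT_iff] at hP hQ
    obtain ⟨w, hw, -⟩ := exists_word_rsk hP.1 hQ.1 hshape hQ.2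
    obtain ⟨σ, hσ⟩ := exists_permList_eq (l := w.reverse)
      ((List.reverse_perm w).trans (hw.invariants.2.2.2.1.symm.trans hP.2))
    have hσ' := hPQ σ
    rw [hσ, List.reverse_reverse] at hσ'
    obtain ⟨rfl, rfl⟩ := hσ'.right_unique hw
    exact ⟨⟨σ, (hcols σ).2 hd⟩, rfl⟩
end

section
/- The map ρ defined on pairs of walks not staying in the region x₁ > x₂ > ... > x_d, which at the first exit time finds the unique coordinate j with p_j = p_{j+1} and swaps the roles of directions j and j+1 in the remainder of the walk, is an involution, and it changes the endpoint (q₁, ..., q_d) of the walk to (q₁, ..., q_{j−1}, q_{j+1}, q_j, q_{j+2}, ..., q_d). -/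
open scoped Classical

/-- The point of the walk after `t` steps: the walk starts at
`(d−1, d−2, …, 0)` and each step `c_i ∈ Fin d` is the positive unit step
`+e_{c_i}`; coordinate `j` after `t` steps is `d − 1 − j` plus the number of
steps among the first `t` in direction `j`. -/
def walkPt (d : ℕ) (c : List (Fin d)) (t : ℕ) (j : Fin d) : ℤ :=
  ((d : ℤ) - 1 - (j : ℤ)) + ((c.take t).count j : ℤ)

/-- The open region `R = {x : x₁ > x₂ > … > x_d}` of strictly decreasing
coordinates. -/
def inR (d : ℕ) (x : Fin d → ℤ) : Prop :=
  ∀ j k : Fin d, j < k → x k < x j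

/-- The walk `c` does not stay in `R`. -/
def leavesR (d : ℕ) (c : List (Fin d)) : Prop :=
  ∃ t, t ≤ c.length ∧ ¬ inR d (walkPt d c t)

/-- The reflection involution `ρ`: if the walk leaves `R`, let `t` be the first
exit time and `j` the (unique) index with `p_j = p_{j+1}` at time `t`; keep the
first `t` steps and swap directions `j` and `j+1` in the remaining steps.
Otherwise leave the walk unchanged. -/
noncomputable def rho (d : ℕ) (c : List (Fin d)) : List (Fin d) :=
  if h : ∃ t, t ≤ c.length ∧ ¬ inR d (walkPt d c t) then
    let t := Nat.find h
    if hj : ∃ j : ℕ, ∃ h1 : j + 1 < d,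
        walkPt d c t ⟨j, by omega⟩ = walkPt d c t ⟨j + 1, h1⟩ then
      let j := Nat.find hj
      have h1 : j + 1 < d := (Nat.find_spec hj).choose
      c.take t ++ (c.drop t).map (fun x : Fin d =>
        if (x : ℕ) = j then (⟨j + 1, h1⟩ : Fin d)
        else if (x : ℕ) = j + 1 then (⟨j, by omega⟩ : Fin d) else x)
    else c
  else c

/-- The first exit from `R` happens through a wall `x_j = x_{j+1}`. -/
theorem exists_walkPt_eq_of_first_exit {d : ℕ} {c : List (Fin d)} {t : ℕ} (ht : t ≤ c.length)
    (hout : ¬ inR d (walkPt d c t)) (hin : ∀ s < t, inR d (walkPt d c s)) :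
    ∃ j : ℕ, ∃ h1 : j + 1 < d, walkPt d c t ⟨j, by omega⟩ = walkPt d c t ⟨j + 1, h1⟩ := by
  obtain _ | s := t
  · refine absurd (fun a b hab => ?_) hout
    simp only [walkPt, List.take_zero, List.count_nil]
    omega
  have hs : inR d (walkPt d c s) := hin s (Nat.lt_succ_self s)
  obtain ⟨e, he⟩ : ∃ e, c.take (s + 1) = c.take s ++ [e] :=
    ⟨_, List.take_succ_eq_append_getElem ht⟩
  have step (a : Fin d) : walkPt d c (s + 1) a = walkPt d c s a + if e = a then 1 else 0 := by
    simp only [walkPt, he, List.count_append, List.count_singleton, beq_iff_eq]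
    split_ifs <;> push_cast <;> ring
  simp only [inR, not_forall, not_lt] at hout
  obtain ⟨a, b, hab, hle⟩ := hout
  have hlt := hs a b hab
  rw [step, step] at hle
  have hb : e = b := by
    by_contra h
    rw [if_neg h] at hle
    split_ifs at hle <;> omega
  have ha : e ≠ a := fun h => hab.ne (h.symm.trans hb)
  rw [if_neg ha, if_pos hb] at hle
  have hsucc : (a : ℕ) + 1 = b := by
    by_contra h
    have hab' : (a : ℕ) < b := hab
    have h₁ := hs a ⟨a + 1, by omega⟩ (by simp [Fin.lt_def])
    have h₂ := hs ⟨a + 1, by omega⟩ b (by simp only [Fin.lt_def]; omega)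
    omega
  have hbeq : (⟨a + 1, by omega⟩ : Fin d) = b := Fin.ext hsucc
  refine ⟨a, by omega, ?_⟩
  rw [Fin.eta, hbeq, step, step, if_neg ha, if_pos hb]
  omega

/-- `ρ` computed from the first exit time `t` and the least `j` with `p_j = p_{j+1}`. -/
theorem rho_eq_take_append_map_swap {d : ℕ} {c : List (Fin d)} {t j : ℕ} (ht : t ≤ c.length)
    (hout : ¬ inR d (walkPt d c t)) (hin : ∀ s < t, inR d (walkPt d c s)) (h1 : j + 1 < d)
    (hj : walkPt d c t ⟨j, by omega⟩ = walkPt d c t ⟨j + 1, h1⟩)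
    (hmin : ∀ i < j, ∀ hi : i + 1 < d,
      walkPt d c t ⟨i, by omega⟩ ≠ walkPt d c t ⟨i + 1, hi⟩) :
    rho d c = c.take t ++ (c.drop t).map (Equiv.swap ⟨j, by omega⟩ ⟨j + 1, h1⟩) := by
  have hc : ∃ t, t ≤ c.length ∧ ¬ inR d (walkPt d c t) := ⟨t, ht, hout⟩
  obtain rfl : Nat.find hc = t :=
    (Nat.find_eq_iff hc).2 ⟨⟨ht, hout⟩, fun s hs h => h.2 (hin s hs)⟩
  have hex : ∃ j : ℕ, ∃ h1 : j + 1 < d,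
      walkPt d c (Nat.find hc) ⟨j, by omega⟩ = walkPt d c (Nat.find hc) ⟨j + 1, h1⟩ :=
    ⟨j, h1, hj⟩
  have hfind : Nat.find hex = j :=
    (Nat.find_eq_iff hex).2 ⟨⟨h1, hj⟩, fun i hi ⟨hi', h⟩ => hmin i hi hi' h⟩
  simp only [rho, dif_pos hc, dif_pos hex]
  congr 2
  funext x
  simp only [Equiv.swap_apply_def, Fin.ext_iff, hfind]

/-- Up to time `t`, the position depends only on the first `t` steps. -/
theorem walkPt_take_append {d : ℕ} {c e : List (Fin d)} {s t : ℕ} (hst : s ≤ t)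
    (ht : t ≤ c.length) : walkPt d (c.take t ++ e) s = walkPt d c s := by
  funext k
  have hlen : s ≤ (c.take t).length := by rw [List.length_take]; omega
  rw [walkPt, walkPt, List.take_append_of_le_length hlen, List.take_take, min_eq_left hst]

/-- The endpoint after permuting the directions of the steps taken after time `t`. -/
theorem walkPt_length_take_append_map {d : ℕ} (c : List (Fin d)) (t : ℕ)
    (σ : Equiv.Perm (Fin d)) (k : Fin d) :
    walkPt d (c.take t ++ (c.drop t).map σ) (c.take t ++ (c.drop t).map σ).length (σ k) =
      walkPt d c t (σ k) + (walkPt d c c.length k - walkPt d c t k) := by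
  have hcount : c.count k = (c.take t).count k + (c.drop t).count k := by
    rw [← List.count_append, List.take_append_drop]
  simp only [walkPt, List.take_length, List.count_append,
    List.count_map_of_injective _ _ σ.injective, hcount]
  push_cast
  ring

/-- The reflection map `ρ` on walks from `(d−1, …, 0)` not staying in
`R = {x₁ > … > x_d}` is an involution, and it exchanges coordinates `j` and
`j + 1` of the endpoint, where `j` is the unique index with `p_j = p_{j+1}` at
the first exit time `t`: if the walk ends at `(q₁, …, q_d)` then `ρ(w)` ends at
`(q₁, …, q_{j−1}, q_{j+1}, q_j, q_{j+2}, …, q_d)`. -/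
theorem rho_involution_and_endpoint (d : ℕ) (c : List (Fin d))
    (hc : ∃ t, t ≤ c.length ∧ ¬ inR d (walkPt d c t)) :
    rho d (rho d c) = c ∧
    ∃ j : ℕ, ∃ h1 : j + 1 < d,
      walkPt d c (Nat.find hc) ⟨j, by omega⟩ =
        walkPt d c (Nat.find hc) ⟨j + 1, h1⟩ ∧
      walkPt d (rho d c) (rho d c).length ⟨j, by omega⟩ =
        walkPt d c c.length ⟨j + 1, h1⟩ ∧
      walkPt d (rho d c) (rho d c).length ⟨j + 1, h1⟩ =
        walkPt d c c.length ⟨j, by omega⟩ ∧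
      ∀ k : Fin d, (k : ℕ) ≠ j → (k : ℕ) ≠ j + 1 →
        walkPt d (rho d c) (rho d c).length k = walkPt d c c.length k := by
  have ht := (Nat.find_spec hc).1
  have hout := (Nat.find_spec hc).2
  have hin : ∀ s < Nat.find hc, inR d (walkPt d c s) := fun s hs =>
    not_not.1 fun h => Nat.find_min hc hs ⟨by omega, h⟩
  have hex := exists_walkPt_eq_of_first_exit ht hout hin
  generalize Nat.find hc = t at *
  obtain ⟨j, h1, hj, hmin⟩ : ∃ j : ℕ, ∃ h1 : j + 1 < d,
      walkPt d c t ⟨j, by omega⟩ = walkPt d c t ⟨j + 1, h1⟩ ∧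
      ∀ i < j, ∀ hi : i + 1 < d, walkPt d c t ⟨i, by omega⟩ ≠ walkPt d c t ⟨i + 1, hi⟩ :=
    have ⟨h1, hj⟩ := Nat.find_spec hex
    ⟨Nat.find hex, h1, hj, fun _ hi hi' h => Nat.find_min hex hi ⟨hi', h⟩⟩
  have hrho := rho_eq_take_append_map_swap ht hout hin h1 hj hmin
  set σ : Equiv.Perm (Fin d) := Equiv.swap ⟨j, by omega⟩ ⟨j + 1, h1⟩ with hσ
  have hpt (s : ℕ) (hs : s ≤ t) : walkPt d (rho d c) s = walkPt d c s := by
    rw [hrho, walkPt_take_append hs ht]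
  have hend (k : Fin d) := walkPt_length_take_append_map c t σ k
  have htake : (c.take t).length = t := List.length_take_of_le ht
  refine ⟨?_, j, h1, hj, ?_, ?_, fun k hk hk' => ?_⟩
  · rw [rho_eq_take_append_map_swap (t := t) (j := j)
      (by rw [hrho, List.length_append]; omega) (by rwa [hpt t le_rfl])
      (fun s hs => by rw [hpt s hs.le]; exact hin s hs) h1 (by rwa [hpt t le_rfl])
      (by rwa [hpt t le_rfl]), ← hσ, hrho, List.take_left' htake, List.drop_left' htake,
      List.map_map]
    have hσσ : (σ : Fin d → Fin d) ∘ σ = id := by funext x; simp [hσ]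
    rw [hσσ, List.map_id, List.take_append_drop]
  · have h := hend ⟨j + 1, h1⟩
    rw [hσ, Equiv.swap_apply_right, ← hσ, ← hrho] at h
    omega
  · have h := hend ⟨j, by omega⟩
    rw [hσ, Equiv.swap_apply_left, ← hσ, ← hrho] at h
    omega
  · have h := hend k
    rw [hσ, Equiv.swap_apply_of_ne_of_ne (fun h => hk (congrArg Fin.val h))
      (fun h => hk' (congrArg Fin.val h)), ← hσ, ← hrho] at h
    omega
end
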